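/- Let ε > 0 and let N ≥ 2 and Q0 ≥ 2 be real numbers with Q0 > N^{1/4}. Let K denote the maximum, over q1 ∈ ℤ[i] with Q0/√2 < N(q1) ≤ Q0 and reduced residues r1 mod q1² with (r1,q1)=1, of the number of pairs (q2, r2) with q2 ∈ ℤ[i], Q0/√2 < N(q2) ≤ Q0, r2 a reduced residue mod q2² with (r2,q2)=1, and N(r1 q2² − r2 q1²) ≤ 2 N^{−1} N(q1)² N(q2)². Then K ≤ C(ε) · ( Q0³/N + (Q0 N)^ε · (Q0²/√N + Q0^{1/2}) ), where C(ε) depends only on ε. -/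

import Mathlib

noncomputable section

/-- The norm of a Gaussian integer, as a real number. -/
def gN (z : GaussianInt) : ℝ := (z.re : ℝ) ^ 2 + (z.im : ℝ) ^ 2

/-!
Fix `q₁` and `r₁`, and put `g = q₁²`. A pair `(q₂, r₂)` counted by `K` is determined by `q = q₂`
and `m = r₁ q² - r₂ g`, so `K` counts the pairs `(q, m)` with `N(q) ≤ Q`, `N(m) ≤ M := 2Q⁴/N` and
`r₁ q² ≡ m mod g`. As `N(g) ≍ Q²`, each `q` belongs to `O(M/Q² + 1)` values of `m`, and there are
`O(Q)` values of `q` in all; what remains is a better bound for the number `s` of possible `q`.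

If `a` and `b` are two of them, then `x = a² - b²` has norm `O(Q²)` and `r₁ x` is congruent mod `g`
to an element of norm `O(M)`. Since `r₁` is invertible mod `g`, only `O(M + 1)` values of `x` are
possible, and a nonzero `x` comes from at most `τ(x) = O(Q^{2ε})` pairs `(a, b)`. The value `x = 0`
comes from at most `2s` pairs, whence `s² ≤ 2s + O(Q^{2ε} (M + 1))`.
-/

lemma cast_card_le_mul_card_of_mapsTo {α β : Type*} [DecidableEq β] {f : α → β} {s : Finset α}
    {t : Finset β} {c : ℝ} (hf : ∀ a ∈ s, f a ∈ t)
    (hc : ∀ b ∈ t, ((s.filter (f · = b)).card : ℝ) ≤ c) : (s.card : ℝ) ≤ c * t.card := by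
  rw [Finset.card_eq_sum_card_fiberwise hf, Nat.cast_sum, mul_comm, ← nsmul_eq_mul]
  exact Finset.sum_le_card_nsmul t _ c hc

section DivisorCount

/-- The divisor function `τ`. Associated divisors are counted separately, and an element with
infinitely many divisors gets the junk value `0`. -/
def divisorCount {R : Type*} [Monoid R] (x : R) : ℕ := {a | a ∣ x}.ncard

lemma divisorCount_of_isUnit {R : Type*} [CommMonoid R] {u : R} (hu : IsUnit u) :
    divisorCount u = divisorCount (1 : R) := by
  have hdvd (a : R) : a ∣ u ↔ a ∣ 1 := ⟨fun h ↦ h.trans hu.dvd, fun h ↦ h.trans (one_dvd u)⟩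
  simp only [divisorCount, hdvd]

lemma divisorCount_mul_le {R : Type*} [CommMonoid R] [DecompositionMonoid R] {x y : R}
    (hx : {a | a ∣ x}.Finite) (hy : {a | a ∣ y}.Finite) :
    divisorCount (x * y) ≤ divisorCount x * divisorCount y := by
  have hsub : {a | a ∣ x * y} ⊆ (fun p : R × R ↦ p.1 * p.2) '' ({a | a ∣ x} ×ˢ {a | a ∣ y}) := by
    intro a ha
    obtain ⟨b, c, hb, hc, rfl⟩ := exists_dvd_and_dvd_of_dvd_mul ha
    exact ⟨(b, c), ⟨hb, hc⟩, rfl⟩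
  have hfin := hx.prod hy
  rw [divisorCount, divisorCount, divisorCount, ← Set.ncard_prod]
  exact (Set.ncard_le_ncard hsub (hfin.image _)).trans (Set.ncard_image_le hfin)

variable {R : Type*} [CommMonoidWithZero R] [IsCancelMulZero R] {p x : R}

lemma dvd_of_dvd_prime_mul_of_not_dvd (hp : Prime p) {a : R} (hpa : ¬ p ∣ a) (ha : a ∣ p * x) :
    a ∣ x := by
  obtain ⟨c, hc⟩ := ha
  obtain ⟨d, rfl⟩ := (hp.dvd_or_dvd (Dvd.intro x hc)).resolve_left hpa
  exact ⟨d, mul_left_cancel₀ hp.ne_zero (by rw [hc, mul_left_comm])⟩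

lemma divisorCount_prime_mul_le (hp : Prime p) (hx : {a | a ∣ x}.Finite) :
    divisorCount (p * x) ≤ 2 * divisorCount x := by
  have hsub : {a | a ∣ p * x} ⊆ {a | a ∣ x} ∪ (p * ·) '' {a | a ∣ x} := by
    intro a ha
    by_cases hpa : p ∣ a
    · obtain ⟨b, rfl⟩ := hpa
      exact Or.inr ⟨b, (mul_dvd_mul_iff_left hp.ne_zero).1 ha, rfl⟩
    · exact Or.inl (dvd_of_dvd_prime_mul_of_not_dvd hp hpa ha)
  calc divisorCount (p * x)
      ≤ ({a | a ∣ x} ∪ (p * ·) '' {a | a ∣ x}).ncard :=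
        Set.ncard_le_ncard hsub (hx.union (hx.image _))
    _ ≤ divisorCount x + divisorCount x :=
        (Set.ncard_union_le _ _).trans (Nat.add_le_add_left (Set.ncard_image_le hx) _)
    _ = 2 * divisorCount x := (two_mul _).symm

lemma divisorCount_prime_pow_le (hp : Prime p) (h1 : {a : R | a ∣ 1}.Finite) (k : ℕ) :
    divisorCount (p ^ k) ≤ divisorCount (1 : R) * (k + 1) := by
  have hsub : {a | a ∣ p ^ k} ⊆
      (fun q : R × ℕ ↦ q.1 * p ^ q.2) '' ({a | a ∣ 1} ×ˢ (Finset.range (k + 1) : Set ℕ)) := by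
    intro a ha
    obtain ⟨i, hi, ha'⟩ := (dvd_prime_pow hp k).1 ha
    obtain ⟨u, rfl⟩ := ha'.symm
    exact ⟨(u, i), ⟨isUnit_iff_dvd_one.1 u.isUnit, by simpa using Nat.lt_succ_of_le hi⟩,
      mul_comm _ _⟩
  have hfin := h1.prod (Finset.finite_toSet (Finset.range (k + 1)))
  have hcard := (Set.ncard_le_ncard hsub (hfin.image _)).trans (Set.ncard_image_le hfin)
  rwa [Set.ncard_prod, Set.ncard_coe_finset, Finset.card_range] at hcard

end DivisorCount

section DivisorBound

lemma exists_add_one_le_mul_pow {s : ℝ} (hs : 1 < s) :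
    ∃ C : ℝ, 0 ≤ C ∧ ∀ k : ℕ, (k + 1 : ℝ) ≤ C * s ^ k := by
  obtain ⟨c, hc, rfl⟩ : ∃ c : ℝ, 0 < c ∧ s = 1 + c := ⟨s - 1, by linarith, by ring⟩
  refine ⟨1 + 1 / c, by positivity, fun k ↦ ?_⟩
  calc (k + 1 : ℝ) ≤ (k + 1) + (k * c + 1 / c) := le_add_of_nonneg_right (by positivity)
    _ = (1 + 1 / c) * (1 + k * c) := by field_simp; ring
    _ ≤ (1 + 1 / c) * (1 + c) ^ k := by gcongr; exact one_add_mul_le_pow (by linarith) k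

variable {R : Type*} [CommMonoidWithZero R] {N : R →*₀ ℝ}

lemma le_of_dvd_of_one_le (hN : ∀ x ≠ 0, 1 ≤ N x) {a x : R} (hx : x ≠ 0) (h : a ∣ x) :
    N a ≤ N x := by
  obtain ⟨b, rfl⟩ := h
  rw [map_mul]
  exact le_mul_of_one_le_right (zero_le_one.trans (hN a (left_ne_zero_of_mul hx)))
    (hN b (right_ne_zero_of_mul hx))

variable [Northcott N]

lemma finite_setOf_dvd (hN : ∀ x ≠ 0, 1 ≤ N x) {x : R} (hx : x ≠ 0) : {a | a ∣ x}.Finite :=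
  (Northcott.finite_le (h := N) (N x)).subset fun _ ↦ le_of_dvd_of_one_le hN hx

lemma one_lt_of_prime [IsCancelMulZero R] (hN : ∀ x ≠ 0, 1 ≤ N x) {p : R} (hp : Prime p) :
    1 < N p := by
  by_contra! hle
  have hpow (k : ℕ) : p ^ k ∈ {x | N x ≤ 1} := by
    simpa using pow_le_one₀ (zero_le_one.trans (hN p hp.ne_zero)) hle
  exact Set.infinite_of_injective_forall_mem (pow_injective_of_not_isUnit hp.not_isUnit hp.ne_zero)
    hpow (Northcott.finite_le 1)

lemma exists_divisorCount_prime_pow_le [IsCancelMulZero R] (hN : ∀ x ≠ 0, 1 ≤ N x) {ε : ℝ}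
    (hε : 0 < ε) {p : R} (hp : Prime p) :
    ∃ C : ℝ, 0 ≤ C ∧ ∀ k : ℕ, (divisorCount (p ^ k) : ℝ) ≤ C * N (p ^ k) ^ ε := by
  have : Nontrivial R := ⟨p, 0, hp.ne_zero⟩
  obtain ⟨C, hC, hle⟩ := exists_add_one_le_mul_pow (Real.one_lt_rpow (one_lt_of_prime hN hp) hε)
  refine ⟨divisorCount (1 : R) * C, by positivity, fun k ↦ ?_⟩
  have hNp : 0 ≤ N p := zero_le_one.trans (hN p hp.ne_zero)
  calc (divisorCount (p ^ k) : ℝ) ≤ divisorCount (1 : R) * (k + 1) :=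
        mod_cast divisorCount_prime_pow_le hp (finite_setOf_dvd hN one_ne_zero) k
    _ ≤ divisorCount (1 : R) * (C * (N p ^ ε) ^ k) := by gcongr; exact hle k
    _ = divisorCount (1 : R) * C * N (p ^ k) ^ ε := by
        rw [map_pow, mul_assoc, Real.rpow_pow_comm hNp]

variable [UniqueFactorizationMonoid R]

lemma divisorCount_le_of_two_le_primes (hN : ∀ x ≠ 0, 1 ≤ N x) {ε : ℝ} (hε : 0 < ε) {x : R}
    (hx : x ≠ 0) (hprimes : ∀ p, Prime p → p ∣ x → 2 ≤ N p ^ ε) :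
    (divisorCount x : ℝ) ≤ divisorCount (1 : R) * N x ^ ε := by
  induction x using UniqueFactorizationMonoid.induction_on_prime with
  | h₁ => exact absurd rfl hx
  | h₂ u hu =>
    rw [divisorCount_of_isUnit hu]
    exact le_mul_of_one_le_right (by positivity) (Real.one_le_rpow (hN u hx) hε.le)
  | h₃ a p ha hp ih =>
    have hNa : 0 ≤ N a := zero_le_one.trans (hN a ha)
    have hNp : 0 ≤ N p := zero_le_one.trans (hN p hp.ne_zero)
    calc (divisorCount (p * a) : ℝ) ≤ 2 * divisorCount a :=
          mod_cast divisorCount_prime_mul_le hp (finite_setOf_dvd hN ha)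
      _ ≤ N p ^ ε * (divisorCount (1 : R) * N a ^ ε) := by
          gcongr
          · exact hprimes p hp (dvd_mul_right p a)
          · exact ih ha fun q hq hqa ↦ hprimes q hq (hqa.mul_left p)
      _ = divisorCount (1 : R) * N (p * a) ^ ε := by
          rw [map_mul, Real.mul_rpow hNp hNa, mul_left_comm]

lemma exists_divisorCount_le_of_primes (hN : ∀ x ≠ 0, 1 ≤ N x) {ε : ℝ} (hε : 0 < ε)
    (P : Finset R) (hP : ∀ p ∈ P, Prime p) :
    ∃ C : ℝ, 0 ≤ C ∧ ∀ x ≠ 0, (∀ p, Prime p → p ∣ x → p ∈ P ∨ 2 ≤ N p ^ ε) →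
      (divisorCount x : ℝ) ≤ C * N x ^ ε := by
  classical
  induction P using Finset.induction_on with
  | empty =>
    exact ⟨divisorCount (1 : R), by positivity, fun x hx hprimes ↦
      divisorCount_le_of_two_le_primes hN hε hx fun p hp hpx ↦ by simpa using hprimes p hp hpx⟩
  | insert π P _ ih =>
    obtain ⟨hπ, hP⟩ := Finset.forall_mem_insert .. |>.1 hP
    obtain ⟨C, hC, hle⟩ := ih hP
    obtain ⟨C', hC', hpow⟩ := exists_divisorCount_prime_pow_le hN hε hπ
    refine ⟨C' * C, by positivity, fun x hx hprimes ↦ ?_⟩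
    obtain ⟨k, y, hπy, rfl⟩ := WfDvdMonoid.max_power_factor hx hπ.irreducible
    have hπk : π ^ k ≠ 0 := left_ne_zero_of_mul hx
    have hy : y ≠ 0 := right_ne_zero_of_mul hx
    have hprimes_y : ∀ p, Prime p → p ∣ y → p ∈ P ∨ 2 ≤ N p ^ ε := fun p hp hpy ↦
      (hprimes p hp (hpy.mul_left _)).imp_left fun hmem ↦
        Finset.mem_of_mem_insert_of_ne hmem (by rintro rfl; exact hπy hpy)
    have hNπ : 0 ≤ N (π ^ k) := zero_le_one.trans (hN _ hπk)
    calc (divisorCount (π ^ k * y) : ℝ) ≤ divisorCount (π ^ k) * divisorCount y :=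
          mod_cast divisorCount_mul_le (finite_setOf_dvd hN hπk) (finite_setOf_dvd hN hy)
      _ ≤ (C' * N (π ^ k) ^ ε) * (C * N y ^ ε) := by
          gcongr
          · exact hpow k
          · exact hle y hy hprimes_y
      _ = C' * C * N (π ^ k * y) ^ ε := by
          rw [map_mul, Real.mul_rpow hNπ (zero_le_one.trans (hN y hy)), mul_mul_mul_comm]

theorem exists_divisorCount_le_mul_rpow (hN : ∀ x ≠ 0, 1 ≤ N x) {ε : ℝ} (hε : 0 < ε) :
    ∃ C : ℝ, 0 ≤ C ∧ ∀ x ≠ 0, (divisorCount x : ℝ) ≤ C * N x ^ ε := by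
  have hfin : {p | Prime p ∧ N p ≤ 2 ^ ε⁻¹}.Finite :=
    (Northcott.finite_le (h := N) _).subset fun _ hp ↦ hp.2
  obtain ⟨C, hC, hle⟩ :=
    exists_divisorCount_le_of_primes hN hε hfin.toFinset fun p hp ↦ (hfin.mem_toFinset.1 hp).1
  refine ⟨C, hC, fun x hx ↦ hle x hx fun p hp _ ↦ ?_⟩
  rcases le_or_gt (N p) (2 ^ ε⁻¹) with hsmall | hlarge
  · exact Or.inl (hfin.mem_toFinset.2 ⟨hp, hsmall⟩)
  · exact Or.inr ((Real.rpow_inv_le_iff_of_pos two_pos.le (zero_le_one.trans (hN p hp.ne_zero))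
      hε).1 hlarge.le)

end DivisorBound

section DifferencesOfSquares

variable {R : Type*} [CommRing R] [NoZeroDivisors R]

lemma card_filter_sq_eq_sq_le [DecidableEq R] (S : Finset R) :
    ((S ×ˢ S).filter fun p ↦ p.1 ^ 2 = p.2 ^ 2).card ≤ 2 * S.card := by
  have hsub : ((S ×ˢ S).filter fun p ↦ p.1 ^ 2 = p.2 ^ 2) ⊆
      S.image (fun a ↦ (a, a)) ∪ S.image (fun a ↦ (a, -a)) := by
    rintro ⟨a, b⟩ hp
    simp only [Finset.mem_filter, Finset.mem_product] at hp
    obtain ⟨⟨ha, -⟩, hab⟩ := hp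
    rcases sq_eq_sq_iff_eq_or_eq_neg.1 hab with rfl | rfl
    · exact Finset.mem_union_left _ (Finset.mem_image_of_mem _ ha)
    · exact Finset.mem_union_right _ (Finset.mem_image.2 ⟨_, ha, by rw [neg_neg]⟩)
  calc _ ≤ (S.image fun a ↦ (a, a)).card + (S.image fun a ↦ (a, -a)).card :=
        (Finset.card_le_card hsub).trans (Finset.card_union_le _ _)
    _ ≤ S.card + S.card := add_le_add Finset.card_image_le Finset.card_image_le
    _ = 2 * S.card := (two_mul _).symm

lemma card_le_divisorCount_of_sq_sub_sq_eq (h2 : (2 : R) ≠ 0) {x : R} (hx : x ≠ 0)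
    (hfin : {a | a ∣ x}.Finite) (A : Finset (R × R)) (hA : ∀ p ∈ A, p.1 ^ 2 - p.2 ^ 2 = x) :
    A.card ≤ divisorCount x := by
  have hdvd : Set.MapsTo (fun p : R × R ↦ p.1 - p.2) A {a | a ∣ x} := fun p hp ↦
    ⟨p.1 + p.2, by rw [← hA p hp]; ring⟩
  have hinj : Set.InjOn (fun p : R × R ↦ p.1 - p.2) A := by
    intro p hp q hq (hsub : p.1 - p.2 = q.1 - q.2)
    have hmul : (p.1 - p.2) * (p.1 + p.2) = (p.1 - p.2) * (q.1 + q.2) := by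
      linear_combination hA p hp - hA q hq - (q.1 + q.2) * hsub
    have hne : p.1 - p.2 ≠ 0 := fun h ↦ hx (by linear_combination (p.1 + p.2) * h - hA p hp)
    have hadd : p.1 + p.2 = q.1 + q.2 := mul_left_cancel₀ hne hmul
    exact Prod.ext (mul_left_cancel₀ h2 (by linear_combination hadd + hsub))
      (mul_left_cancel₀ h2 (by linear_combination hadd - hsub))
  rw [← Set.ncard_coe_finset]
  exact Set.ncard_le_ncard_of_injOn _ hdvd hinj hfin

lemma card_sq_le_of_sq_sub_sq_mem (h2 : (2 : R) ≠ 0) (hfin : ∀ x : R, x ≠ 0 → {a | a ∣ x}.Finite)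
    {S X : Finset R} (hX : ∀ a ∈ S, ∀ b ∈ S, a ^ 2 - b ^ 2 ∈ X) {B : ℝ} (hB : 0 ≤ B)
    (hτ : ∀ x ∈ X, x ≠ 0 → (divisorCount x : ℝ) ≤ B) :
    (S.card : ℝ) ^ 2 ≤ 2 * S.card + B * X.card := by
  classical
  set T := (S ×ˢ S).filter fun p ↦ ¬ p.1 ^ 2 = p.2 ^ 2
  have hmaps : ∀ p ∈ T, p.1 ^ 2 - p.2 ^ 2 ∈ X := fun p hp ↦ by
    have hmem := Finset.mem_product.1 (Finset.mem_filter.1 hp).1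
    exact hX _ hmem.1 _ hmem.2
  have hfiber : ∀ x ∈ X, ((T.filter fun p ↦ p.1 ^ 2 - p.2 ^ 2 = x).card : ℝ) ≤ B := by
    intro x hxX
    rcases eq_or_ne x 0 with rfl | hx
    · rw [Finset.filter_false_of_mem, Finset.card_empty, Nat.cast_zero]
      · exact hB
      · exact fun p hp h ↦ (Finset.mem_filter.1 hp).2 (sub_eq_zero.1 h)
    · refine le_trans ?_ (hτ x hxX hx)
      exact_mod_cast card_le_divisorCount_of_sq_sub_sq_eq h2 hx (hfin x hx) _
        fun p hp ↦ (Finset.mem_filter.1 hp).2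
  have hsplit : S.card ^ 2 = ((S ×ˢ S).filter fun p ↦ p.1 ^ 2 = p.2 ^ 2).card + T.card := by
    rw [Finset.card_filter_add_card_filter_not, Finset.card_product, sq]
  calc (S.card : ℝ) ^ 2 = ((S ×ˢ S).filter fun p ↦ p.1 ^ 2 = p.2 ^ 2).card + T.card :=
        mod_cast hsplit
    _ ≤ 2 * S.card + B * X.card :=
        add_le_add (mod_cast card_filter_sq_eq_sq_le S)
          (cast_card_le_mul_card_of_mapsTo hmaps hfiber)

end DifferencesOfSquares

section GaussianNorm

/-- The norm `gN` as a multiplicative homomorphism, the form required by the divisor bound. -/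
def gNHom : GaussianInt →*₀ ℝ where
  toFun := gN
  map_zero' := by simp [gN]
  map_one' := by simp [gN]
  map_mul' a b := by
    simp only [gN, Zsqrtd.re_mul, Zsqrtd.im_mul]
    push_cast
    ring

lemma gN_zero : gN 0 = 0 := map_zero gNHom

lemma gN_mul (a b : GaussianInt) : gN (a * b) = gN a * gN b := map_mul gNHom a b

lemma gN_pow (a : GaussianInt) (k : ℕ) : gN (a ^ k) = gN a ^ k := map_pow gNHom a k

lemma gN_nonneg (z : GaussianInt) : 0 ≤ gN z := by unfold gN; positivity

lemma gN_eq_norm (z : GaussianInt) : gN z = z.norm := by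
  rw [GaussianInt.intCast_real_norm, GaussianInt.toComplex_def₂, Complex.normSq_mk, gN, sq, sq]

lemma one_le_gN {z : GaussianInt} (hz : z ≠ 0) : 1 ≤ gN z := by
  rw [gN_eq_norm]
  exact_mod_cast GaussianInt.norm_pos.2 hz

lemma gN_sub_le (a b : GaussianInt) : gN (a - b) ≤ 2 * (gN a + gN b) := by
  have parallelogram : gN (a - b) + gN (a + b) = 2 * (gN a + gN b) := by
    simp only [gN, Zsqrtd.re_sub, Zsqrtd.im_sub, Zsqrtd.re_add, Zsqrtd.im_add]
    push_cast
    ring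
  linarith [gN_nonneg (a + b)]

/-- The square of side `2⌊√R⌋` centred at `0`, which contains the disc `N(z) ≤ R`. -/
def gaussianBox (R : ℝ) : Finset GaussianInt :=
  (Finset.Icc (-⌊√R⌋) ⌊√R⌋ ×ˢ Finset.Icc (-⌊√R⌋) ⌊√R⌋).image fun p ↦ ⟨p.1, p.2⟩

lemma mem_gaussianBox {R : ℝ} {z : GaussianInt} (hz : gN z ≤ R) : z ∈ gaussianBox R := by
  have habs {a : ℤ} (ha : (a : ℝ) ^ 2 ≤ R) : a ∈ Finset.Icc (-⌊√R⌋) ⌊√R⌋ := by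
    rw [Finset.mem_Icc, ← abs_le, Int.le_floor, Int.cast_abs]
    exact Real.abs_le_sqrt ha
  exact Finset.mem_image.2 ⟨(z.re, z.im), Finset.mem_product.2
    ⟨habs ((le_add_of_nonneg_right (sq_nonneg _)).trans hz),
      habs ((le_add_of_nonneg_left (sq_nonneg _)).trans hz)⟩, rfl⟩

lemma card_gaussianBox_le {R : ℝ} (hR : 0 ≤ R) : ((gaussianBox R).card : ℝ) ≤ 9 * (R + 1) := by
  have hfloor : 0 ≤ ⌊√R⌋ := Int.floor_nonneg.2 (Real.sqrt_nonneg R)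
  have hside : ((Finset.Icc (-⌊√R⌋) ⌊√R⌋).card : ℝ) ≤ 2 * √R + 1 := by
    have hcard : ((Finset.Icc (-⌊√R⌋) ⌊√R⌋).card : ℤ) = 2 * ⌊√R⌋ + 1 := by
      rw [Int.card_Icc]; omega
    have hcast : ((Finset.Icc (-⌊√R⌋) ⌊√R⌋).card : ℝ) = 2 * ⌊√R⌋ + 1 := mod_cast hcard
    linarith [Int.floor_le √R]
  calc ((gaussianBox R).card : ℝ) ≤ (Finset.Icc (-⌊√R⌋) ⌊√R⌋).card ^ 2 := by
        rw [sq, ← Nat.cast_mul, ← Finset.card_product]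
        exact_mod_cast Finset.card_image_le
    _ ≤ (2 * √R + 1) ^ 2 := by gcongr
    _ ≤ 9 * (R + 1) := by nlinarith [sq_nonneg (√R - 1), Real.sq_sqrt hR]

instance : Northcott gNHom :=
  ⟨fun R ↦ (gaussianBox R).finite_toSet.subset fun _ ↦ mem_gaussianBox⟩

lemma finite_setOf_gN_le (R : ℝ) : {z | gN z ≤ R}.Finite := Northcott.finite_le (h := gNHom) R

end GaussianNorm

section CongruenceCounting

variable {g r : GaussianInt} {R M : ℝ} {A : Finset GaussianInt}

lemma card_le_of_gN_le (hR : 0 ≤ R) (hA : ∀ z ∈ A, gN z ≤ R) : (A.card : ℝ) ≤ 9 * (R + 1) :=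
  le_trans (mod_cast Finset.card_le_card fun z hz ↦ mem_gaussianBox (hA z hz))
    (card_gaussianBox_le hR)

lemma card_le_of_gN_le_of_dvd_sub (hg : g ≠ 0) (hR : 0 ≤ R) (hA : ∀ z ∈ A, gN z ≤ R)
    (hdvd : ∀ z ∈ A, ∀ w ∈ A, g ∣ z - w) : (A.card : ℝ) ≤ 9 * (4 * R / gN g + 1) := by
  have hgpos : 0 < gN g := one_pos.trans_le (one_le_gN hg)
  rcases A.eq_empty_or_nonempty with rfl | ⟨w, hw⟩
  · rw [Finset.card_empty, Nat.cast_zero]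
    positivity
  choose! quot hquot using fun z hz ↦ hdvd z hz w hw
  have hinj : Set.InjOn quot A := fun a ha b hb hab ↦
    sub_left_injective ((hquot a ha).trans ((congrArg (g * ·) hab).trans (hquot b hb).symm))
  rw [← Finset.card_image_of_injOn hinj]
  refine card_le_of_gN_le (by positivity) (Finset.forall_mem_image.2 fun z hz ↦ ?_)
  rw [le_div_iff₀' hgpos, ← gN_mul, ← hquot z hz]
  linarith [gN_sub_le z w, hA z hz, hA w hw]

/-- The Gaussian integers `x` of norm at most `R` for which the class of `r * x` mod `g` contains
an element of norm at most `M`. -/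
def smallResidues (g r : GaussianInt) (R M : ℝ) : Set GaussianInt :=
  {x | gN x ≤ R ∧ ∃ m, gN m ≤ M ∧ g ∣ r * x - m}

lemma finite_smallResidues (g r : GaussianInt) (R M : ℝ) : (smallResidues g r R M).Finite :=
  (finite_setOf_gN_le R).subset fun _ hx ↦ hx.1

lemma sub_mem_smallResidues {x y : GaussianInt} (hx : x ∈ smallResidues g r R M)
    (hy : y ∈ smallResidues g r R M) : x - y ∈ smallResidues g r (4 * R) (4 * M) := by
  obtain ⟨hxR, m, hm, hgm⟩ := hx
  obtain ⟨hyR, n, hn, hgn⟩ := hy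
  refine ⟨by linarith [gN_sub_le x y], m - n, by linarith [gN_sub_le m n], ?_⟩
  rw [show r * (x - y) - (m - n) = (r * x - m) - (r * y - n) by ring]
  exact dvd_sub hgm hgn

lemma card_le_of_mem_smallResidues (hg : g ≠ 0) (hr : IsCoprime r g) (hR : 0 ≤ R) (hM : 0 ≤ M)
    (hA : ∀ x ∈ A, x ∈ smallResidues g r R M) :
    (A.card : ℝ) ≤ 9 * (4 * R / gN g + 1) * (9 * (M + 1)) := by
  have hgpos : 0 < gN g := one_pos.trans_le (one_le_gN hg)
  choose! ν hνM hνdvd using fun x hx ↦ (hA x hx).2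
  have hfiber : ∀ m ∈ A.image ν, ((A.filter (ν · = m)).card : ℝ) ≤ 9 * (4 * R / gN g + 1) := by
    refine fun m _ ↦ card_le_of_gN_le_of_dvd_sub hg hR
      (fun x hx ↦ (hA x (Finset.mem_filter.1 hx).1).1) fun x hx y hy ↦ ?_
    obtain ⟨hxA, hx⟩ := Finset.mem_filter.1 hx
    obtain ⟨hyA, hy⟩ := Finset.mem_filter.1 hy
    have hdvd : g ∣ r * (x - y) := by
      rw [show r * (x - y) = (r * x - ν x) - (r * y - ν y) by rw [hx, hy]; ring]
      exact dvd_sub (hνdvd x hxA) (hνdvd y hyA)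
    exact hr.symm.dvd_of_dvd_mul_left hdvd
  calc (A.card : ℝ) ≤ 9 * (4 * R / gN g + 1) * (A.image ν).card :=
        cast_card_le_mul_card_of_mapsTo (fun _ ↦ Finset.mem_image_of_mem ν) hfiber
    _ ≤ 9 * (4 * R / gN g + 1) * (9 * (M + 1)) := by
        gcongr
        exact card_le_of_gN_le hM (Finset.forall_mem_image.2 hνM)

end CongruenceCounting

section SmallSquareResidues

lemma le_two_add_sqrt_of_sq_le {s B : ℝ} (h : s ^ 2 ≤ 2 * s + B) : s ≤ 2 + √B := by
  by_contra! hlt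
  have hs : 2 < s := by linarith [Real.sqrt_nonneg B]
  have hB : B < (s - 2) ^ 2 := (Real.sqrt_lt' (by linarith)).1 (by linarith)
  linarith

lemma sqrt_mul_rpow_mul_le {D ε Q M : ℝ} (hD : 0 ≤ D) (hQ : 0 ≤ Q) (hM : 0 ≤ M) :
    √(D * (4 * Q ^ 2) ^ ε * (297 * (9 * (4 * M + 1)))) ≤
      √(10692 * D * 4 ^ ε) * (Q ^ ε * (√M + 1)) := by
  have hrpow : (4 * Q ^ 2) ^ ε = 4 ^ ε * (Q ^ ε) ^ 2 := by
    rw [Real.mul_rpow (by norm_num) (by positivity), Real.rpow_pow_comm hQ]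
  have hsq : M + 1 ≤ (√M + 1) ^ 2 := by nlinarith [Real.sqrt_nonneg M, Real.sq_sqrt hM]
  calc √(D * (4 * Q ^ 2) ^ ε * (297 * (9 * (4 * M + 1))))
      ≤ √(10692 * D * 4 ^ ε * (Q ^ ε * (√M + 1)) ^ 2) := by
        refine Real.sqrt_le_sqrt ?_
        calc D * (4 * Q ^ 2) ^ ε * (297 * (9 * (4 * M + 1)))
            ≤ D * (4 * Q ^ 2) ^ ε * (10692 * (M + 1)) :=
              mul_le_mul_of_nonneg_left (by linarith) (by positivity)
          _ ≤ D * (4 * Q ^ 2) ^ ε * (10692 * (√M + 1) ^ 2) := by gcongr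
          _ = 10692 * D * 4 ^ ε * (Q ^ ε * (√M + 1)) ^ 2 := by rw [hrpow]; ring
    _ = √(10692 * D * 4 ^ ε) * (Q ^ ε * (√M + 1)) := by
        rw [Real.sqrt_mul (by positivity), Real.sqrt_sq (by positivity)]

lemma exists_card_le_of_sq_mem_smallResidues {ε : ℝ} (hε : 0 < ε) :
    ∃ C : ℝ, 0 < C ∧ ∀ (Q M : ℝ) (g r : GaussianInt) (S : Finset GaussianInt), 1 ≤ Q → 0 ≤ M →
      Q ^ 2 ≤ 2 * gN g → IsCoprime r g → (∀ q ∈ S, q ^ 2 ∈ smallResidues g r (Q ^ 2) M) →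
      (S.card : ℝ) ≤ C * (Q ^ ε * (√M + 1)) := by
  obtain ⟨D, hD, hτ⟩ :=
    exists_divisorCount_le_mul_rpow (N := gNHom) (fun _ ↦ one_le_gN) hε
  refine ⟨2 + √(10692 * D * 4 ^ ε), by positivity, fun Q M g r S hQ hM hgQ hr hS ↦ ?_⟩
  have hgpos : 0 < gN g := by nlinarith
  have hg : g ≠ 0 := by rintro rfl; exact hgpos.ne' gN_zero
  set X := (finite_smallResidues g r (4 * Q ^ 2) (4 * M)).toFinset
  have hX : ∀ a ∈ S, ∀ b ∈ S, a ^ 2 - b ^ 2 ∈ X := fun a ha b hb ↦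
    (Set.Finite.mem_toFinset _).2 (sub_mem_smallResidues (hS a ha) (hS b hb))
  have hXmem : ∀ x ∈ X, x ∈ smallResidues g r (4 * Q ^ 2) (4 * M) := fun x hx ↦
    (Set.Finite.mem_toFinset _).1 hx
  have hXcard : (X.card : ℝ) ≤ 297 * (9 * (4 * M + 1)) := by
    have hratio : 4 * (4 * Q ^ 2) / gN g ≤ 32 := by rw [div_le_iff₀ hgpos]; linarith
    calc (X.card : ℝ) ≤ 9 * (4 * (4 * Q ^ 2) / gN g + 1) * (9 * (4 * M + 1)) :=
          card_le_of_mem_smallResidues hg hr (by positivity) (by positivity) hXmem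
      _ ≤ 9 * (32 + 1) * (9 * (4 * M + 1)) := by gcongr
      _ = 297 * (9 * (4 * M + 1)) := by norm_num
  have hτX : ∀ x ∈ X, x ≠ 0 → (divisorCount x : ℝ) ≤ D * (4 * Q ^ 2) ^ ε := fun x hx hx0 ↦
    (hτ x hx0).trans (mul_le_mul_of_nonneg_left
      (Real.rpow_le_rpow (gN_nonneg x) (hXmem x hx).1 hε.le) hD)
  have hsq := card_sq_le_of_sq_sub_sq_mem two_ne_zero
    (fun x ↦ finite_setOf_dvd (N := gNHom) fun _ ↦ one_le_gN) hX (by positivity) hτX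
  have hone : 1 ≤ Q ^ ε * (√M + 1) :=
    one_le_mul_of_one_le_of_one_le (Real.one_le_rpow hQ hε.le)
      (le_add_of_nonneg_left (Real.sqrt_nonneg M))
  calc (S.card : ℝ) ≤ 2 + √(D * (4 * Q ^ 2) ^ ε * (297 * (9 * (4 * M + 1)))) :=
        le_two_add_sqrt_of_sq_le (hsq.trans (by gcongr))
    _ ≤ 2 * (Q ^ ε * (√M + 1)) + √(10692 * D * 4 ^ ε) * (Q ^ ε * (√M + 1)) :=
        add_le_add (by linarith) (sqrt_mul_rpow_mul_le hD (by linarith) hM)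
    _ = (2 + √(10692 * D * 4 ^ ε)) * (Q ^ ε * (√M + 1)) := (add_mul _ _ _).symm

/-- The pairs `(q, m)` of Gaussian integers with `N(q) ≤ Q`, `N(m) ≤ M` and `r q² ≡ m mod g`, to
which the counting problem is reduced. -/
def smallSquarePairs (g r : GaussianInt) (Q M : ℝ) : Set (GaussianInt × GaussianInt) :=
  {p | gN p.1 ≤ Q ∧ gN p.2 ≤ M ∧ g ∣ r * p.1 ^ 2 - p.2}

lemma finite_smallSquarePairs (g r : GaussianInt) (Q M : ℝ) : (smallSquarePairs g r Q M).Finite :=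
  ((finite_setOf_gN_le Q).prod (finite_setOf_gN_le M)).subset fun _ hp ↦ ⟨hp.1, hp.2.1⟩

lemma card_le_mul_card_image_fst {g r : GaussianInt} {Q M : ℝ} (hg : g ≠ 0) (hM : 0 ≤ M)
    {T : Finset (GaussianInt × GaussianInt)} (hT : ∀ p ∈ T, p ∈ smallSquarePairs g r Q M) :
    (T.card : ℝ) ≤ 9 * (4 * M / gN g + 1) * (T.image Prod.fst).card := by
  refine cast_card_le_mul_card_of_mapsTo (fun _ ↦ Finset.mem_image_of_mem Prod.fst) fun q _ ↦ ?_
  have hinj : Set.InjOn Prod.snd (T.filter (·.1 = q) : Set (GaussianInt × GaussianInt)) :=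
    fun a ha b hb hab ↦ Prod.ext
      ((Finset.mem_filter.1 ha).2.trans (Finset.mem_filter.1 hb).2.symm) hab
  rw [← Finset.card_image_of_injOn hinj]
  refine card_le_of_gN_le_of_dvd_sub hg hM (Finset.forall_mem_image.2 fun p hp ↦
    (hT p (Finset.mem_filter.1 hp).1).2.1) ?_
  refine Finset.forall_mem_image.2 fun a ha ↦ Finset.forall_mem_image.2 fun b hb ↦ ?_
  obtain ⟨haT, ha⟩ := Finset.mem_filter.1 ha
  obtain ⟨hbT, hb⟩ := Finset.mem_filter.1 hb
  rw [show a.2 - b.2 = (r * b.1 ^ 2 - b.2) - (r * a.1 ^ 2 - a.2) by rw [ha, hb]; ring]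
  exact dvd_sub (hT b hbT).2.2 (hT a haT).2.2

lemma exists_ncard_smallSquarePairs_le {ε : ℝ} (hε : 0 < ε) :
    ∃ C : ℝ, 0 < C ∧ ∀ (Q M : ℝ) (g r : GaussianInt), 1 ≤ Q → 0 ≤ M → Q ^ 2 ≤ 2 * gN g →
      IsCoprime r g →
      ((smallSquarePairs g r Q M).ncard : ℝ) ≤ C * (M / Q + Q ^ ε * (√M + 1)) := by
  obtain ⟨C, hC, hle⟩ := exists_card_le_of_sq_mem_smallResidues hε
  refine ⟨1296 + 9 * C, by positivity, fun Q M g r hQ hM hgQ hr ↦ ?_⟩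
  have hQpos : 0 < Q := by linarith
  have hgpos : 0 < gN g := by nlinarith
  have hg : g ≠ 0 := by rintro rfl; exact hgpos.ne' gN_zero
  rw [Set.ncard_eq_toFinset_card _ (finite_smallSquarePairs g r Q M)]
  set T := (finite_smallSquarePairs g r Q M).toFinset
  have hT : ∀ p ∈ T, p ∈ smallSquarePairs g r Q M := fun p hp ↦ (Set.Finite.mem_toFinset _).1 hp
  set S := T.image Prod.fst
  have hS_trivial : (S.card : ℝ) ≤ 18 * Q := by
    have hcard := card_le_of_gN_le hQpos.le (Finset.forall_mem_image.2 fun p hp ↦ (hT p hp).1)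
    linarith
  have hS_squares : (S.card : ℝ) ≤ C * (Q ^ ε * (√M + 1)) := by
    refine hle Q M g r S hQ hM hgQ hr (Finset.forall_mem_image.2 fun p hp ↦ ?_)
    obtain ⟨hq, hm, hdvd⟩ := hT p hp
    exact ⟨by rw [gN_pow]; exact pow_le_pow_left₀ (gN_nonneg _) hq 2, p.2, hm, hdvd⟩
  have hratio : 4 * M / gN g ≤ 8 * M / Q ^ 2 := by
    rw [div_le_div_iff₀ hgpos (by positivity)]
    nlinarith
  have hMQ : 0 ≤ M / Q := by positivity
  have hrest : 0 ≤ Q ^ ε * (√M + 1) := by positivity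
  calc (T.card : ℝ) ≤ 9 * (8 * M / Q ^ 2 + 1) * S.card :=
        (card_le_mul_card_image_fst hg hM hT).trans (by gcongr)
    _ = 72 * M / Q ^ 2 * S.card + 9 * S.card := by ring
    _ ≤ 72 * M / Q ^ 2 * (18 * Q) + 9 * (C * (Q ^ ε * (√M + 1))) := by gcongr
    _ = 1296 * (M / Q) + 9 * C * (Q ^ ε * (√M + 1)) := by field_simp; ring
    _ ≤ (1296 + 9 * C) * (M / Q + Q ^ ε * (√M + 1)) := by nlinarith

end SmallSquareResidues

section ClosePairs

lemma isCoprime_of_isUnit_mk {R : Type*} [CommRing R] {g r : R}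
    (h : IsUnit (Ideal.Quotient.mk (Ideal.span {g}) r)) : IsCoprime r g := by
  obtain ⟨b, hb⟩ := h.exists_left_inv
  obtain ⟨v, rfl⟩ := Ideal.Quotient.mk_surjective b
  rw [← map_mul, ← map_one (Ideal.Quotient.mk _), Ideal.Quotient.eq,
    Ideal.mem_span_singleton] at hb
  obtain ⟨c, hc⟩ := hb
  exact ⟨v, -c, by linear_combination hc⟩

/-- The pairs `(q₂, r₂)` counted by `K` for given `q₁` and `r₁`: those with `q₂` in the dyadic
window of `Q` and `|r₁/q₁² - r₂/q₂²|² ≤ 2/N`, with denominators cleared. A residue `r₂` is encoded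
by its class `u`, as `rep q₂ u`. -/
abbrev ClosePair (rep : (q : GaussianInt) → (GaussianInt ⧸ Ideal.span {q ^ 2})ˣ → GaussianInt)
    (N Q : ℝ) (q₁ r₁ : GaussianInt) : Type :=
  {p : Σ q₂ : GaussianInt, (GaussianInt ⧸ Ideal.span {q₂ ^ 2})ˣ //
    Q / Real.sqrt 2 < gN p.1 ∧ gN p.1 ≤ Q ∧
    gN (r₁ * p.1 ^ 2 - rep p.1 p.2 * q₁ ^ 2) ≤ 2 * N⁻¹ * (gN q₁) ^ 2 * (gN p.1) ^ 2}

variable {rep : (q : GaussianInt) → (GaussianInt ⧸ Ideal.span {q ^ 2})ˣ → GaussianInt} {N Q : ℝ}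
  {q₁ : GaussianInt}

lemma card_closePair_le_ncard_smallSquarePairs
    (hrep : ∀ q u, Ideal.Quotient.mk (Ideal.span {q ^ 2}) (rep q u) = u) (hN : 0 ≤ N)
    (hq₁ : q₁ ≠ 0) (hq₁Q : gN q₁ ≤ Q) (r₁ : GaussianInt) :
    Nat.card (ClosePair rep N Q q₁ r₁) ≤
      (smallSquarePairs (q₁ ^ 2) r₁ Q (2 * Q ^ 4 / N)).ncard := by
  let toPair (p : ClosePair rep N Q q₁ r₁) : GaussianInt × GaussianInt :=
    (p.1.1, r₁ * p.1.1 ^ 2 - rep p.1.1 p.1.2 * q₁ ^ 2)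
  have hmem (p) : toPair p ∈ smallSquarePairs (q₁ ^ 2) r₁ Q (2 * Q ^ 4 / N) := by
    obtain ⟨⟨q, u⟩, -, hq, hclose⟩ := p
    refine ⟨hq, hclose.trans ?_, rep q u, by ring⟩
    have := gN_nonneg q
    have := gN_nonneg q₁
    calc 2 * N⁻¹ * gN q₁ ^ 2 * gN q ^ 2 ≤ 2 * N⁻¹ * Q ^ 2 * Q ^ 2 := by gcongr
      _ = 2 * Q ^ 4 / N := by ring
  have hinj : Function.Injective toPair := by
    rintro ⟨⟨q, u⟩, _⟩ ⟨⟨q', u'⟩, _⟩ heq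
    obtain ⟨rfl, hm⟩ := Prod.mk.inj heq
    have hrep_eq : rep q u = rep q u' :=
      mul_right_cancel₀ (pow_ne_zero 2 hq₁) (sub_right_injective hm)
    obtain rfl : u = u' := Units.ext (by rw [← hrep, ← hrep, hrep_eq])
    rfl
  have := (finite_smallSquarePairs (q₁ ^ 2) r₁ Q (2 * Q ^ 4 / N)).to_subtype
  rw [← Nat.card_coe_set_eq]
  exact Nat.card_le_card_of_injective (Set.codRestrict toPair _ hmem)
    ((Set.injective_codRestrict hmem).2 hinj)

lemma sq_le_two_mul_gN_sq (hQ : 0 ≤ Q) (hq₁ : Q / √2 < gN q₁) : Q ^ 2 ≤ 2 * gN (q₁ ^ 2) := by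
  have hsq := pow_le_pow_left₀ (by positivity) hq₁.le 2
  rw [div_pow, Real.sq_sqrt two_pos.le, ← gN_pow] at hsq
  linarith

lemma exists_card_closePair_le {ε : ℝ} (hε : 0 < ε) :
    ∃ C : ℝ, 0 < C ∧
      ∀ (N Q : ℝ) (rep : (q : GaussianInt) → (GaussianInt ⧸ Ideal.span {q ^ 2})ˣ → GaussianInt)
        (q₁ r₁ : GaussianInt), 0 < N → 1 ≤ Q →
      (∀ q u, Ideal.Quotient.mk (Ideal.span {q ^ 2}) (rep q u) = u) →
      Q / √2 < gN q₁ → gN q₁ ≤ Q → IsCoprime r₁ (q₁ ^ 2) →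
      (Nat.card (ClosePair rep N Q q₁ r₁) : ℝ) ≤
        C * (Q ^ 3 / N + Q ^ ε * (Q ^ 2 / √N + 1)) := by
  obtain ⟨C, hC, hle⟩ := exists_ncard_smallSquarePairs_le hε
  refine ⟨2 * C, by positivity, fun N Q rep q₁ r₁ hN hQ hrep hq₁ hq₁Q hr₁ ↦ ?_⟩
  have hQpos : 0 < Q := by linarith
  have hq₁0 : q₁ ≠ 0 := by
    rintro rfl
    exact absurd hq₁ (by rw [gN_zero]; exact not_lt.2 (by positivity))
  have hsqrt : √(2 * Q ^ 4 / N) ≤ 2 * (Q ^ 2 / √N) := by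
    refine Real.sqrt_le_iff.2 ⟨by positivity, ?_⟩
    rw [mul_pow, div_pow, Real.sq_sqrt hN.le, ← pow_mul, mul_div_assoc]
    gcongr
    norm_num
  calc (Nat.card (ClosePair rep N Q q₁ r₁) : ℝ)
      ≤ (smallSquarePairs (q₁ ^ 2) r₁ Q (2 * Q ^ 4 / N)).ncard :=
        mod_cast card_closePair_le_ncard_smallSquarePairs hrep hN.le hq₁0 hq₁Q r₁
    _ ≤ C * (2 * Q ^ 4 / N / Q + Q ^ ε * (√(2 * Q ^ 4 / N) + 1)) :=
        hle Q _ _ _ hQ (by positivity) (sq_le_two_mul_gN_sq hQpos.le hq₁) hr₁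
    _ ≤ C * (2 * Q ^ 4 / N / Q + Q ^ ε * (2 * (Q ^ 2 / √N) + 2)) := by
        gcongr
        norm_num
    _ = 2 * C * (Q ^ 3 / N + Q ^ ε * (Q ^ 2 / √N + 1)) := by field_simp

end ClosePairs

lemma cast_sSup_le {A : Set ℕ} {B : ℝ} (hB : 0 ≤ B) (hA : ∀ m ∈ A, (m : ℝ) ≤ B) :
    ((sSup A : ℕ) : ℝ) ≤ B :=
  (Nat.le_floor_iff hB).1 (csSup_le' fun m hm ↦ Nat.le_floor (hA m hm))

theorem final_counting_bound_square_general {ε : ℝ} (hε : 0 < ε) :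
    ∃ C : ℝ, 0 < C ∧
      ∀ N Q0 : ℝ, 0 < N → 1 ≤ Q0 →
      ∀ rep : (q : GaussianInt) → (GaussianInt ⧸ Ideal.span {q ^ 2})ˣ → GaussianInt,
      (∀ q u, Ideal.Quotient.mk (Ideal.span {q ^ 2}) (rep q u) = u) →
      ∀ K : ℕ,
      K = sSup {m : ℕ | ∃ q1 : GaussianInt, (Q0 / √2 < gN q1 ∧ gN q1 ≤ Q0) ∧
            ∃ u1 : (GaussianInt ⧸ Ideal.span {q1 ^ 2})ˣ,
              m = Nat.card (ClosePair rep N Q0 q1 (rep q1 u1))} →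
      (K : ℝ) ≤ C * (Q0 ^ 3 / N + Q0 ^ ε * (Q0 ^ 2 / √N + 1)) := by
  obtain ⟨C, hC, hle⟩ := exists_card_closePair_le hε
  refine ⟨C, hC, fun N Q0 hN hQ rep hrep K hK ↦ ?_⟩
  rw [hK]
  refine cast_sSup_le (by positivity) ?_
  rintro m ⟨q1, ⟨hq1, hq1Q⟩, u1, rfl⟩
  exact hle N Q0 rep q1 _ hN hQ hrep hq1 hq1Q
    (isCoprime_of_isUnit_mk (by rw [hrep]; exact u1.isUnit))

/-- **Final bound for the counting quantity in the square-moduli case** (inequality (32)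
of the paper). For `ε > 0` there is `C(ε)` such that for all `N, Q₀ ≥ 2` with
`Q₀ > N^{1/4}` and any fixed system `rep` of representatives of invertible residues mod
`q²`, the counting quantity `K` satisfies
`K ≤ C(ε) (Q₀³/N + (Q₀N)^ε (Q₀²/√N + Q₀^{1/2}))`. -/
theorem final_counting_bound_square :
    ∀ ε : ℝ, 0 < ε → ∃ C : ℝ, 0 < C ∧
      ∀ (N Q0 : ℝ), 2 ≤ N → 2 ≤ Q0 → N ^ ((1 : ℝ) / 4) < Q0 →
      ∀ rep : (q : GaussianInt) → (GaussianInt ⧸ Ideal.span {q ^ 2})ˣ → GaussianInt,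
      (∀ (q : GaussianInt) (u : (GaussianInt ⧸ Ideal.span {q ^ 2})ˣ),
        Ideal.Quotient.mk (Ideal.span {q ^ 2}) (rep q u)
          = (u : GaussianInt ⧸ Ideal.span {q ^ 2})) →
      ∀ K : ℕ,
      K = sSup {m : ℕ | ∃ q1 : GaussianInt,
            (Q0 / Real.sqrt 2 < gN q1 ∧ gN q1 ≤ Q0) ∧
            ∃ u1 : (GaussianInt ⧸ Ideal.span {q1 ^ 2})ˣ,
              m = Nat.card {p : Σ q2 : GaussianInt, (GaussianInt ⧸ Ideal.span {q2 ^ 2})ˣ //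
                    Q0 / Real.sqrt 2 < gN p.1 ∧ gN p.1 ≤ Q0 ∧
                    gN (rep q1 u1 * p.1 ^ 2 - rep p.1 p.2 * q1 ^ 2)
                      ≤ 2 * N⁻¹ * (gN q1) ^ 2 * (gN p.1) ^ 2}} →
      (K : ℝ) ≤ C * (Q0 ^ 3 / N
          + (Q0 * N) ^ ε * (Q0 ^ 2 / Real.sqrt N + Q0 ^ ((1 : ℝ) / 2))) := by
  refine fun ε hε ↦ (final_counting_bound_square_general hε).imp fun C ⟨hC, hle⟩ ↦ ⟨hC, ?_⟩
  refine fun N Q0 hN hQ _ rep hrep K hK ↦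
    (hle N Q0 (by linarith) (by linarith) rep hrep K hK).trans ?_
  gcongr
  · exact le_mul_of_one_le_right (by linarith) (by linarith)
  · exact Real.one_le_rpow (by linarith) (by norm_num)
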